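/- Let α ∈ (0,1] and let ℓ_α(z) = 1 + z/2 + 𝟙[|z| > 2(1−α)]·(√(α² + (|z|/2 − (1−α))²) − α), with derivative ℓ_α′. Then for all reals z, z′: ℓ_α(z′) ≤ ℓ_α(z) + ℓ_α′(z)·(z′ − z) + (1/(4α))·(z′ − z)². That is, ℓ_α (and hence the surrogate σ_α(z) = ℓ_α(−z)) is smooth with curvature constant 1/(2α). -/

import Mathlib

/-!
Up to the affine part `1 + z / 2 - α`, the loss is `√(α² + d²)` with `d` the distance from `z / 2`
to the interval `[-(1 - α), 1 - α]`. For every point `p` of a set `K`,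
`dist(y, K)² ≤ ‖y - p‖² = ‖x - p‖² + 2⟪x - p, y - x⟫ + ‖y - x‖²`. The tangent of the concave square
root at `α² + ‖x - p‖² ≥ α²` has slope at most `1 / (2α)`, which turns this bound into a smoothness
estimate for `√(α² + dist(·, K)²)` when `p` is the projection of `x` onto `K`.
-/

open Metric Set
open scoped RealInnerProductSpace

lemma sqrt_le_sqrt_add_sub_div {a b : ℝ} (ha : 0 < a) (hb : 0 ≤ b) :
    √b ≤ √a + (b - a) / (2 * √a) := by
  have tangent_eq : √a + (b - a) / (2 * √a) = (a + b) / (2 * √a) := by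
    field_simp
    linarith [Real.sq_sqrt ha.le]
  rw [tangent_eq, le_div_iff₀ (by positivity)]
  calc √b * (2 * √a) = 2 * √a * √b := by ring
    _ ≤ √a ^ 2 + √b ^ 2 := two_mul_le_add_sq _ _
    _ = a + b := by rw [Real.sq_sqrt ha.le, Real.sq_sqrt hb]

lemma sign_div_of_pos {b : ℝ} (hb : 0 < b) (x : ℝ) : (x / b).sign = x.sign := by
  simp only [Real.sign, div_neg_iff, div_pos_iff, hb, hb.not_gt, and_true, and_false, false_or,
    or_false]

section InfDist

variable {E : Type*} [SeminormedAddCommGroup E] [InnerProductSpace ℝ E] {K : Set E} {p : E}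

lemma infDist_sq_le_norm_sub_sq_add_inner (hp : p ∈ K) (x y : E) :
    infDist y K ^ 2 ≤ ‖x - p‖ ^ 2 + 2 * ⟪x - p, y - x⟫ + ‖y - x‖ ^ 2 :=
  calc infDist y K ^ 2 ≤ ‖y - p‖ ^ 2 := by
        rw [← dist_eq_norm]
        exact pow_le_pow_left₀ infDist_nonneg (infDist_le_dist_of_mem hp) 2
    _ = ‖x - p + (y - x)‖ ^ 2 := by rw [sub_add_sub_cancel']
    _ = ‖x - p‖ ^ 2 + 2 * ⟪x - p, y - x⟫ + ‖y - x‖ ^ 2 := norm_add_sq_real _ _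

lemma sqrt_sq_add_infDist_sq_le {α : ℝ} (hα : 0 < α) (hp : p ∈ K) (x y : E) :
    √(α ^ 2 + infDist y K ^ 2) ≤
      √(α ^ 2 + ‖x - p‖ ^ 2) + ⟪x - p, y - x⟫ / √(α ^ 2 + ‖x - p‖ ^ 2) +
        ‖y - x‖ ^ 2 / (2 * α) := by
  set R := √(α ^ 2 + ‖x - p‖ ^ 2)
  have hαR : α ≤ R := Real.le_sqrt_of_sq_le (le_add_of_nonneg_right (sq_nonneg _))
  have hR : 0 < R := hα.trans_le hαR
  calc √(α ^ 2 + infDist y K ^ 2)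
      ≤ R + (α ^ 2 + infDist y K ^ 2 - (α ^ 2 + ‖x - p‖ ^ 2)) / (2 * R) :=
        sqrt_le_sqrt_add_sub_div (by positivity) (by positivity)
    _ ≤ R + (2 * ⟪x - p, y - x⟫ + ‖y - x‖ ^ 2) / (2 * R) := by
        gcongr
        linarith [infDist_sq_le_norm_sub_sq_add_inner hp x y]
    _ = R + ⟪x - p, y - x⟫ / R + ‖y - x‖ ^ 2 / (2 * R) := by
        field_simp
        ring
    _ ≤ R + ⟪x - p, y - x⟫ / R + ‖y - x‖ ^ 2 / (2 * α) := by
        gcongr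

end InfDist

/-- The soft-thresholding operator at level `c`: for `0 ≤ c`, the residual of the projection of
`x` onto `[-c, c]`. It expresses both the loss and its derivative without case distinctions. -/
noncomputable def softThreshold (c x : ℝ) : ℝ :=
  x.sign * max (|x| - c) 0

section SoftThreshold

variable {c x : ℝ}

lemma softThreshold_of_abs_le (h : |x| ≤ c) : softThreshold c x = 0 := by
  rw [softThreshold, max_eq_right (sub_nonpos.2 h), mul_zero]

lemma softThreshold_of_lt_abs (h : c < |x|) : softThreshold c x = x.sign * (|x| - c) := by
  rw [softThreshold, max_eq_left (sub_nonneg.2 h.le)]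

lemma abs_softThreshold (hc : 0 ≤ c) (x : ℝ) : |softThreshold c x| = max (|x| - c) 0 := by
  rw [softThreshold, abs_mul, abs_of_nonneg (le_max_right (|x| - c) 0)]
  rcases eq_or_ne x 0 with rfl | hx
  · simp [hc]
  · rcases Real.sign_apply_eq_of_ne_zero x hx with h | h <;> simp [h]

lemma sub_softThreshold_mem_Icc (hc : 0 ≤ c) (x : ℝ) : x - softThreshold c x ∈ Icc (-c) c := by
  rcases le_or_gt |x| c with h | h
  · rw [softThreshold_of_abs_le h, sub_zero]
    exact abs_le.1 h
  · rw [softThreshold_of_lt_abs h]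
    rcases lt_abs.1 h with hx | hx
    · rw [Real.sign_of_pos (hc.trans_lt hx), abs_of_pos (hc.trans_lt hx)]
      constructor <;> linarith
    · have hneg : x < 0 := by linarith
      rw [Real.sign_of_neg hneg, abs_of_neg hneg]
      constructor <;> linarith

lemma infDist_Icc_neg_self (hc : 0 ≤ c) (x : ℝ) :
    infDist x (Icc (-c) c) = |softThreshold c x| := by
  apply le_antisymm
  · simpa [Real.dist_eq] using infDist_le_dist_of_mem (x := x) (sub_softThreshold_mem_Icc hc x)
  · rw [abs_softThreshold hc, le_infDist (nonempty_Icc.2 (neg_le_self hc))]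
    intro q hq
    rw [Real.dist_eq]
    refine max_le ?_ (abs_nonneg _)
    linarith [abs_sub_abs_le_abs_sub x q, abs_le.2 hq]

lemma softThreshold_sq_of_lt_abs (hc : 0 ≤ c) (h : c < |x|) :
    softThreshold c x ^ 2 = (|x| - c) ^ 2 := by
  rw [← sq_abs, abs_softThreshold hc, max_eq_left (sub_nonneg.2 h.le)]

lemma sqrt_sq_add_softThreshold_sq_sub {α : ℝ} (hα : 0 ≤ α) (hc : 0 ≤ c) (x : ℝ) :
    √(α ^ 2 + softThreshold c x ^ 2) - α =
      if c < |x| then √(α ^ 2 + (|x| - c) ^ 2) - α else 0 := by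
  split_ifs with h
  · rw [softThreshold_sq_of_lt_abs hc h]
  · simp [softThreshold_of_abs_le (not_lt.1 h), Real.sqrt_sq hα]

lemma softThreshold_div_sqrt (hc : 0 ≤ c) (α x : ℝ) :
    softThreshold c x / √(α ^ 2 + softThreshold c x ^ 2) =
      (if c < |x| then 1 else 0) * x.sign * ((|x| - c) / √(α ^ 2 + (|x| - c) ^ 2)) := by
  split_ifs with h
  · rw [softThreshold_sq_of_lt_abs hc h, softThreshold_of_lt_abs h, one_mul, mul_div_assoc]
  · simp [softThreshold_of_abs_le (not_lt.1 h)]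

lemma sqrt_sq_add_softThreshold_sq_le {α : ℝ} (hα : 0 < α) (hc : 0 ≤ c) (x y : ℝ) :
    √(α ^ 2 + softThreshold c y ^ 2) ≤
      √(α ^ 2 + softThreshold c x ^ 2) +
        softThreshold c x / √(α ^ 2 + softThreshold c x ^ 2) * (y - x) +
        (y - x) ^ 2 / (2 * α) := by
  have h := sqrt_sq_add_infDist_sq_le hα (sub_softThreshold_mem_Icc hc x) x y
  simp only [infDist_Icc_neg_self hc, sub_sub_cancel, Real.norm_eq_abs, sq_abs,
    Real.inner_apply] at h
  rwa [div_mul_eq_mul_div]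

end SoftThreshold

theorem malpha_conjugate_smooth_general
    {α c : ℝ} (hα : 0 < α) (hc : 0 ≤ c) {ℓ D : ℝ → ℝ}
    (hℓ : ∀ z, ℓ z = 1 + z / 2 +
      if 2 * c < |z| then √(α ^ 2 + (|z| / 2 - c) ^ 2) - α else 0)
    (hD : ∀ z, D z = 1 / 2 * (1 + (if 2 * c < |z| then 1 else 0) * z.sign *
      ((|z| / 2 - c) / √(α ^ 2 + (|z| / 2 - c) ^ 2)))) (z z' : ℝ) :
    ℓ z' ≤ ℓ z + D z * (z' - z) + 1 / (8 * α) * (z' - z) ^ 2 := by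
  have abs_half (x : ℝ) : |x / 2| = |x| / 2 := by rw [abs_div, abs_two]
  have lt_abs_half (x : ℝ) : c < |x| / 2 ↔ 2 * c < |x| := lt_div_iff₀' two_pos
  have hℓ' (x : ℝ) : ℓ x = 1 + x / 2 + (√(α ^ 2 + softThreshold c (x / 2) ^ 2) - α) := by
    simp only [hℓ, sqrt_sq_add_softThreshold_sq_sub hα.le hc, abs_half, lt_abs_half]
  have hD' : D z = 1 / 2 * (1 + softThreshold c (z / 2) /
      √(α ^ 2 + softThreshold c (z / 2) ^ 2)) := by
    simp only [hD, softThreshold_div_sqrt hc, abs_half, lt_abs_half, sign_div_of_pos two_pos]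
  have quadratic_eq : (z' / 2 - z / 2) ^ 2 / (2 * α) = 1 / (8 * α) * (z' - z) ^ 2 := by
    field_simp
    ring
  rw [hℓ', hℓ', hD']
  linarith [sqrt_sq_add_softThreshold_sq_le hα hc (z / 2) (z' / 2)]

/-- For `α ∈ (0,1]`, the function
`ℓ_α(z) = 1 + z/2 + 𝟙[|z| > 2(1−α)]·(√(α² + (|z|/2 − (1−α))²) − α)`, with derivative
`ℓ_α′`, satisfies the smoothness bound
`ℓ_α(z′) ≤ ℓ_α(z) + ℓ_α′(z)(z′ − z) + (1/(4α))(z′ − z)²` for all `z, z′`. -/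
theorem malpha_conjugate_smooth
    (α : ℝ) (hα : α ∈ Set.Ioc (0:ℝ) 1)
    (ℓ D : ℝ → ℝ)
    (hℓ : ∀ z : ℝ, ℓ z = 1 + z / 2 +
      (if 2 * (1 - α) < |z| then
        Real.sqrt (α ^ 2 + (|z| / 2 - (1 - α)) ^ 2) - α
      else 0))
    (hD : ∀ z : ℝ, D z = (1/2) * (1 + (if 2 * (1 - α) < |z| then (1:ℝ) else 0) *
        Real.sign z *
        ((|z| / 2 - (1 - α)) / Real.sqrt (α ^ 2 + (|z| / 2 - (1 - α)) ^ 2)))) :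
    ∀ z z' : ℝ, ℓ z' ≤ ℓ z + D z * (z' - z) + (1 / (4 * α)) * (z' - z) ^ 2 := by
  intro z z'
  refine (malpha_conjugate_smooth_general hα.1 (sub_nonneg.2 hα.2) hℓ hD z z').trans ?_
  have hα_pos := hα.1
  gcongr
  norm_num
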